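/- arXiv:2604.14319 — 5 statements merged into one kernel-verified Lean document; each statement's English description precedes it below -/
import Mathlib

section
/- Let (Λ, μ) be a probability measure space, S a type of measurement settings, and A, B : S → Λ → ℝ measurable functions satisfying |A m λ| ≤ 1 and |B n λ| ≤ 1 for all settings m, n and all λ ∈ Λ. Define the correlator E(m, n) = ∫_Λ A m λ · B n λ dμ(λ). Then for all settings a, b, c, d: |E(a,b) − E(a,d)| + |E(c,b) + E(c,d)| ≤ 2. (CHSH inequality for Bell-local hidden-variable models.) -/
open MeasureTheory

/-! The inequality holds pointwise in the hidden state: for numbers in `[-1, 1]`,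
`|x y - x w| + |z y + z w| ≤ |y - w| + |y + w| = 2 max |y| |w| ≤ 2` (`chsh_pointwise`).
Integrating over the probability measure and moving the absolute values outside the
integrals gives the bound for the correlators. -/

lemma chsh_pointwise {x y z w : ℝ} (hx : |x| ≤ 1) (hy : |y| ≤ 1) (hz : |z| ≤ 1)
    (hw : |w| ≤ 1) : |x * y - x * w| + |z * y + z * w| ≤ 2 := by
  have h1 : |x * y - x * w| ≤ |y - w| := by
    rw [← mul_sub, abs_mul]
    exact mul_le_of_le_one_left (abs_nonneg _) hx
  have h2 : |z * y + z * w| ≤ |y + w| := by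
    rw [← mul_add, abs_mul]
    exact mul_le_of_le_one_left (abs_nonneg _) hz
  have h3 : |y - w| + |y + w| ≤ 2 := by
    rw [abs_le] at hy hw
    rcases abs_cases (y - w) with h | h <;> rcases abs_cases (y + w) with h' | h' <;> linarith
  linarith

/-- **CHSH inequality for Bell-local hidden-variable models.** If `(Λ, μ)` is a
probability space, and `A B : S → Λ → ℝ` are measurable response functions bounded
by `1` in absolute value, then the correlators `E m n = ∫ A m · B n dμ` satisfy
`|E a b − E a d| + |E c b + E c d| ≤ 2`. -/
theorem chsh_inequality {Λ : Type*} [MeasurableSpace Λ]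
    (μ : Measure Λ) [IsProbabilityMeasure μ]
    {S : Type*} (A B : S → Λ → ℝ)
    (hAmeas : ∀ m, Measurable (A m)) (hBmeas : ∀ n, Measurable (B n))
    (hAbd : ∀ m l, |A m l| ≤ 1) (hBbd : ∀ n l, |B n l| ≤ 1)
    (E : S → S → ℝ) (hE : ∀ m n, E m n = ∫ l, A m l * B n l ∂μ)
    (a b c d : S) :
    |E a b - E a d| + |E c b + E c d| ≤ 2 := by
  have hint : ∀ m n, Integrable (fun l => A m l * B n l) μ := fun m n =>
    Integrable.of_bound ((hAmeas m).mul (hBmeas n)).aestronglyMeasurable 1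
      (Filter.Eventually.of_forall fun l => by
        rw [Real.norm_eq_abs, abs_mul]
        exact mul_le_one₀ (hAbd m l) (abs_nonneg _) (hBbd n l))
  have hsub := (hint a b).sub (hint a d)
  have hadd := (hint c b).add (hint c d)
  rw [hE, hE, hE, hE, ← integral_sub (hint a b) (hint a d),
    ← integral_add (hint c b) (hint c d)]
  calc |∫ l, A a l * B b l - A a l * B d l ∂μ| + |∫ l, A c l * B b l + A c l * B d l ∂μ|
      ≤ (∫ l, |A a l * B b l - A a l * B d l| ∂μ)
          + ∫ l, |A c l * B b l + A c l * B d l| ∂μ :=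
        add_le_add abs_integral_le_integral_abs abs_integral_le_integral_abs
    _ = ∫ l, |A a l * B b l - A a l * B d l| + |A c l * B b l + A c l * B d l| ∂μ :=
        (integral_add hsub.abs hadd.abs).symm
    _ ≤ ∫ _, (2 : ℝ) ∂μ :=
        integral_mono (hsub.abs.add hadd.abs) (integrable_const _) fun l =>
          chsh_pointwise (hAbd a l) (hBbd b l) (hAbd c l) (hBbd d l)
    _ = 2 := by simp
end

section
/- Let X, Y, A, B and Λ be finite types. Let q : Λ → ℝ be nonnegative with Σ_λ q(λ) = 1, and let pA : X → Λ → A → ℝ and pB : Y → Λ → B → ℝ be nonnegative with Σ_a pA x λ a = 1 and Σ_b pB y λ b = 1 for all x, y, λ. Then there exists c : (X → A) × (Y → B) → ℝ nonnegative with Σ c = 1 such that for all a, b, x, y: Σ_λ q(λ)·pA x λ a·pB y λ b = Σ_{(f,g)} c(f,g)·[a = f x]·[b = g y]. (Every factorisable hidden-variable behaviour is a convex mixture of local deterministic behaviours: the core of Fine's theorem, used to show that simplex embeddability of a bipartite GPT implies membership in the Bell-local polytope.) -/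
/-!
For each value `l` of the hidden variable, the distributions `pA x l` (over all `x`) can be
coupled independently: the product `∏ x, pA x l (f x)` is a probability distribution on response
functions `f : X → A` whose marginal at `x` is `pA x l`, and likewise for `B`. Mixing over `l`
gives the weights `c (f, g) = ∑ l, q l * (∏ x, pA x l (f x)) * (∏ y, pB y l (g y))`, and the claim
reduces to the normalisation (`sum_prod_eq_one`) and the one-point marginals
(`sum_prod_mul_ite`) of a product distribution.
-/

open Finset

theorem sum_prod_eq_one {X A : Type*} [Fintype X] [Fintype A] [DecidableEq X]
    (p : X → A → ℝ) (hp : ∀ x, ∑ a, p x a = 1) :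
    ∑ f : X → A, ∏ x, p x (f x) = 1 := by
  rw [← Fintype.prod_sum]
  simp [hp]

/-- The marginal at `x₀` of the product distribution on response functions is `p x₀`. -/
theorem sum_prod_mul_ite {X A : Type*} [Fintype X] [Fintype A] [DecidableEq X] [DecidableEq A]
    (p : X → A → ℝ) (hp : ∀ x, ∑ a, p x a = 1) (x₀ : X) (a : A) :
    ∑ f : X → A, (∏ x, p x (f x)) * (if a = f x₀ then 1 else 0) = p x₀ a := by
  -- The indicator is absorbed into the factor at `x₀`, so the sum is again a product of sums.
  have h : ∀ f : X → A, (∏ x, p x (f x)) * (if a = f x₀ then 1 else 0) =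
      ∏ x, p x (f x) * (if x = x₀ then (if a = f x then 1 else 0) else 1) := by
    intro f
    rw [Finset.prod_mul_distrib, Finset.prod_ite_eq' univ x₀]
    simp
  simp_rw [h]
  rw [← Fintype.prod_sum (fun x a' => p x a' * (if x = x₀ then (if a = a' then 1 else 0) else 1)),
    Finset.prod_eq_single x₀]
  · simp
  · intro x _ hx
    simp [hx, hp]
  · simp

/-- **Core of Fine's theorem.** Every factorisable hidden-variable behaviour
`p(a,b|x,y) = Σ_λ q(λ)·pA(a|x,λ)·pB(b|y,λ)` is a convex mixture of local deterministic
behaviours `[a = f x]·[b = g y]`. -/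
theorem factorisable_is_convex_mixture_of_localDeterministic
    {X Y A B Λ : Type*}
    [Fintype X] [Fintype Y] [Fintype A] [Fintype B] [Fintype Λ]
    [DecidableEq X] [DecidableEq Y] [DecidableEq A] [DecidableEq B]
    (q : Λ → ℝ) (hq0 : ∀ l, 0 ≤ q l) (hq1 : ∑ l, q l = 1)
    (pA : X → Λ → A → ℝ) (pB : Y → Λ → B → ℝ)
    (hpA0 : ∀ x l a, 0 ≤ pA x l a) (hpB0 : ∀ y l b, 0 ≤ pB y l b)
    (hpA1 : ∀ x l, ∑ a, pA x l a = 1) (hpB1 : ∀ y l, ∑ b, pB y l b = 1) :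
    ∃ c : (X → A) × (Y → B) → ℝ,
      (∀ fg, 0 ≤ c fg) ∧ (∑ fg, c fg = 1) ∧
      ∀ a b x y,
        (∑ l, q l * pA x l a * pB y l b) =
          ∑ fg : (X → A) × (Y → B),
            c fg * (if a = fg.1 x then 1 else 0) * (if b = fg.2 y then 1 else 0) := by
  refine ⟨fun fg => ∑ l, q l * (∏ x, pA x l (fg.1 x)) * (∏ y, pB y l (fg.2 y)), ?_, ?_, ?_⟩
  · intro fg
    exact Finset.sum_nonneg fun l _ => mul_nonneg
      (mul_nonneg (hq0 l) (Finset.prod_nonneg fun x _ => hpA0 _ _ _))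
      (Finset.prod_nonneg fun y _ => hpB0 _ _ _)
  · rw [Finset.sum_comm, ← hq1]
    refine Finset.sum_congr rfl fun l _ => ?_
    simp_rw [Fintype.sum_prod_type, ← Finset.mul_sum,
      sum_prod_eq_one (fun y => pB y l) (fun y => hpB1 y l), mul_one, ← Finset.mul_sum,
      sum_prod_eq_one (fun x => pA x l) (fun x => hpA1 x l), mul_one]
  · intro a b x y
    simp_rw [Finset.sum_mul]
    rw [Finset.sum_comm]
    refine Finset.sum_congr rfl fun l _ => ?_
    rw [← sum_prod_mul_ite (fun x => pA x l) (fun x => hpA1 x l) x a,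
      ← sum_prod_mul_ite (fun y => pB y l) (fun y => hpB1 y l) y b, mul_assoc,
      Finset.sum_mul_sum, ← Fintype.sum_prod_type', Finset.mul_sum]
    refine Finset.sum_congr rfl fun fg _ => ?_
    ring
end

section
/- Let X be a finite set of measurements, O a finite set of outcomes, and M a finite family of subsets of X whose union is X. Let an empirical model assign to each C ∈ M a probability distribution e_C on the functions C → O. Then the following are equivalent: (1) there exists a global section, i.e. a probability distribution d on the functions X → O such that for every C ∈ M and every s : C → O, e_C(s) = Σ_{g : X → O, g|_C = s} d(g); (2) there exists a factorisable hidden-variable realisation, i.e. a finite set Λ, a probability distribution h_Λ on Λ, and for each λ ∈ Λ and each x ∈ X a probability distribution h^λ_x on O, such that for every C ∈ M and every s : C → O, e_C(s) = Σ_{λ ∈ Λ} h_Λ(λ) · Π_{x ∈ C} h^λ_x(s(x)). -/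
/-!
From a global section `d`, take the global assignments `g : X → O` themselves as hidden variables,
distributed by `d`, each with deterministic responses `o ↦ [g x = o]`; the product of the
responses over a context `C` is then the indicator of `g|_C = s`.
Conversely, from a factorisable realisation, `d g = ∑ l, hΛ l * ∏ x, h l x (g x)` is a mixture
of product distributions on `X → O`; its marginal on `C` is computed by
`sum_extensions_prod`, since the measurements outside `C` each sum out to `1`.
-/

open Finset

/-- The marginal on a context `C` of a product distribution on `X → O` is the product of the
factors indexed by `C`. -/
lemma sum_extensions_prod {X O : Type*} [Fintype X] [DecidableEq X] [Fintype O] [DecidableEq O]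
    (p : X → O → ℝ) (hp : ∀ x, ∑ o, p x o = 1) (C : Finset X) (s : {x // x ∈ C} → O) :
    ∑ g ∈ Finset.univ.filter (fun g : X → O => ∀ x : {x // x ∈ C}, g x.1 = s x),
      ∏ x, p x (g x) = ∏ x : {x // x ∈ C}, p x.1 (s x) := by
  -- The extensions of `s` form a box: a singleton on each `x ∈ C`, everything elsewhere.
  let t : X → Finset O := fun x => if hx : x ∈ C then {s ⟨x, hx⟩} else univ
  have hbox : Finset.univ.filter (fun g : X → O => ∀ x : {x // x ∈ C}, g x.1 = s x)
      = Fintype.piFinset t := by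
    ext g
    simp only [mem_filter, mem_univ, true_and, Fintype.mem_piFinset, t]
    constructor
    · intro hg x
      by_cases hx : x ∈ C
      · simpa [hx] using hg ⟨x, hx⟩
      · simp [hx]
    · rintro hg ⟨x, hx⟩
      simpa [hx] using hg x
  rw [hbox, ← Finset.prod_univ_sum]
  have hout : ∏ x, ∑ o ∈ t x, p x o = ∏ x ∈ C, ∑ o ∈ t x, p x o := by
    symm
    apply Finset.prod_subset (subset_univ C)
    intro x _ hx
    simp [t, hx, hp]
  rw [hout, ← Finset.prod_coe_sort]
  refine Finset.prod_congr rfl fun x _ => ?_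
  simp [t]

/-- **Sheaf-theoretic characterisation (Abramsky–Brandenburger / Fine).** For an empirical
model `e` on a measurement cover `M` of a finite set of measurements `X` with finite
outcome set `O`, the existence of a global section is equivalent to the existence of a
factorisable (noncontextual) hidden-variable realisation. -/
theorem global_section_iff_factorisable_hv
    {X O : Type*} [Fintype X] [DecidableEq X] [Fintype O] [DecidableEq O]
    (M : Finset (Finset X)) (hcover : ∀ x : X, ∃ C ∈ M, x ∈ C)
    (e : (C : Finset X) → ({x // x ∈ C} → O) → ℝ)
    (he0 : ∀ C ∈ M, ∀ s, 0 ≤ e C s)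
    (he1 : ∀ C ∈ M, ∑ s, e C s = 1) :
    (∃ d : (X → O) → ℝ,
        (∀ g, 0 ≤ d g) ∧ (∑ g, d g = 1) ∧
        ∀ C ∈ M, ∀ s : {x // x ∈ C} → O,
          e C s = ∑ g ∈ Finset.univ.filter
              (fun g : X → O => ∀ x : {x // x ∈ C}, g x.1 = s x), d g)
    ↔
    (∃ (n : ℕ) (hΛ : Fin n → ℝ) (h : Fin n → X → O → ℝ),
        (∀ l, 0 ≤ hΛ l) ∧ (∑ l, hΛ l = 1) ∧
        (∀ l x o, 0 ≤ h l x o) ∧ (∀ l x, ∑ o, h l x o = 1) ∧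
        ∀ C ∈ M, ∀ s : {x // x ∈ C} → O,
          e C s = ∑ l, hΛ l * ∏ x : {x // x ∈ C}, h l x.1 (s x)) := by
  constructor
  · rintro ⟨d, hd0, hd1, hd⟩
    let φ := (Fintype.equivFin (X → O)).symm
    refine ⟨Fintype.card (X → O), fun l => d (φ l), fun l x o => if φ l x = o then 1 else 0,
      fun l => hd0 _, ?_, ?_, ?_, ?_⟩
    · rw [← hd1]
      exact Equiv.sum_comp φ d
    · intro l x o
      dsimp only
      split_ifs <;> norm_num
    · intro l x
      simp
    · intro C hC s
      rw [hd C hC s, Finset.sum_filter]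
      rw [Equiv.sum_comp φ (fun g => d g * ∏ x : {x // x ∈ C}, if g x.1 = s x then (1 : ℝ) else 0)]
      refine Finset.sum_congr rfl fun g _ => ?_
      rw [Fintype.prod_boole]
      simp
  · rintro ⟨n, hΛ, h, hΛ0, hΛ1, h0, h1, hr⟩
    refine ⟨fun g => ∑ l, hΛ l * ∏ x, h l x (g x), ?_, ?_, ?_⟩
    · intro g
      exact Finset.sum_nonneg fun l _ =>
        mul_nonneg (hΛ0 l) (Finset.prod_nonneg fun x _ => h0 l x _)
    · rw [Finset.sum_comm, ← hΛ1]
      refine Finset.sum_congr rfl fun l _ => ?_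
      -- Total mass is the marginal on the empty context.
      have htot := sum_extensions_prod (h l) (h1 l) ∅ (fun x => absurd x.2 (notMem_empty _))
      simp at htot
      rw [← Finset.mul_sum, htot, mul_one]
    · intro C hC s
      rw [hr C hC s, Finset.sum_comm]
      refine Finset.sum_congr rfl fun l _ => ?_
      rw [← Finset.mul_sum, sum_extensions_prod (h l) (h1 l)]
end

section
/- Let n ≥ 1, let μ ∈ ℝⁿ, and let V be a symmetric positive-definite real n×n matrix. Let g : ℝⁿ → ℝ be the Gaussian density g(x) = ((2π)ⁿ · det V)^{−1/2} · exp(−(1/2)·(x−μ)ᵀ V⁻¹ (x−μ)). Then for every Lebesgue-measurable set ω ⊆ ℝⁿ with 0 < vol(ω) < ∞ and every constant t > 0, g is not Lebesgue-almost-everywhere equal to t·𝟙_ω. In particular, no Gaussian state of Gaussian quantum mechanics can realise the uniform preparation 𝟙_ω/vol(ω) required by the Uniform Preparation assumption. -/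
open MeasureTheory Matrix

/-!
The Gaussian density is strictly positive everywhere. If it were almost everywhere equal to
`t * 𝟙_ω`, then almost every point would lie in `ω`, so `ω` would have the volume of all of `ℝⁿ`,
which is infinite because `n ≥ 1`. This contradicts `volume ω < ⊤`.
-/

/-- **Gaussian quantum mechanics violates the Uniform Preparation assumption.** A Gaussian
density on `ℝⁿ` (with mean `m` and symmetric positive-definite covariance `V`) is not
Lebesgue-almost-everywhere equal to `t·𝟙_ω` for any measurable set `ω` of finite nonzero
volume and any constant `t > 0`. -/
theorem gaussian_density_not_ae_uniform (n : ℕ) (hn : 1 ≤ n)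
    (m : Fin n → ℝ) (V : Matrix (Fin n) (Fin n) ℝ) (hV : V.PosDef)
    (g : (Fin n → ℝ) → ℝ)
    (hg : ∀ x, g x =
        ((2 * Real.pi) ^ n * V.det) ^ (-(1 : ℝ) / 2) *
          Real.exp (-(1 / 2 : ℝ) * ((x - m) ⬝ᵥ (V⁻¹ *ᵥ (x - m)))))
    (ω : Set (Fin n → ℝ)) (hω : MeasurableSet ω)
    (hpos : 0 < volume ω) (hfin : volume ω < ⊤)
    (t : ℝ) (ht : 0 < t) :
    ¬ g =ᵐ[volume] fun x => t * ω.indicator 1 x := by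
  intro h
  have hpos_g : ∀ x, 0 < g x := fun x => by
    rw [hg x]
    have := hV.det_pos
    positivity
  have hmem : ∀ᵐ x ∂(volume : Measure (Fin n → ℝ)), x ∈ ω := by
    filter_upwards [h] with x hx
    by_contra hxω
    have := hpos_g x
    simp [hx, hxω] at this
  have hvol : volume ω = volume (Set.univ : Set (Fin n → ℝ)) :=
    measure_congr (Filter.eventuallyEq_univ.mpr hmem)
  -- `n ≥ 1` makes `ℝⁿ` noncompact, hence of infinite Haar measure.
  haveI : Nonempty (Fin n) := ⟨⟨0, hn⟩⟩
  rw [hvol, measure_univ_of_isAddLeftInvariant] at hfin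
  exact lt_irrefl _ hfin
end

section
/- Let G be a finite simple graph with vertex set V and edge set E, and let w : V → ℝ be nonnegative vertex weights. Define the weighted independence number α(G, w) as the maximum of Σ_{i ∈ S} w(i) over all independent sets S ⊆ V (sets of vertices containing no edge of G). Then for every function f : V → {0, 1}: Σ_{i ∈ V} w(i)·f(i) − Σ_{{i,j} ∈ E} max(w(i), w(j))·f(i)·f(j) ≤ α(G, w). -/
/-!
Let `T` be the set of vertices where `f = 1` and fix a linear order on `V`. Let `S ⊆ T` be the
vertices with no larger neighbour in `T`; then `S` is independent, so `∑ i ∈ S, w i ≤ α`. Each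
`i ∈ T \ S` has a larger neighbour `n i ∈ T`, and `i ↦ {i, n i}` is injective because `i` is the
smaller endpoint. Since `w i ≤ max (w i) (w (n i))`, the weight of `T \ S` is at most the edge sum.
-/

open Finset

/-- **Deterministic case of the Cabello–Severini–Winter noncontextuality inequality.**
For a finite simple graph `G` with nonnegative vertex weights `w`, weighted independence
number `α`, and any `{0,1}`-valued assignment `f`,
`Σ_i w i · f i − Σ_{{i,j} ∈ E} max (w i) (w j) · f i · f j ≤ α`. -/
theorem csw_deterministic_bound {V : Type*} [Fintype V] [DecidableEq V]
    (G : SimpleGraph V) [DecidableRel G.Adj]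
    (w : V → ℝ) (hw : ∀ i, 0 ≤ w i)
    (α : ℝ)
    (hα : IsGreatest
      {t : ℝ | ∃ S : Finset V, (∀ i ∈ S, ∀ j ∈ S, ¬ G.Adj i j) ∧ t = ∑ i ∈ S, w i} α)
    (f : V → ℝ) (hf : ∀ i, f i = 0 ∨ f i = 1) :
    (∑ i, w i * f i) -
      (∑ e ∈ G.edgeFinset,
        Sym2.lift ⟨fun i j => max (w i) (w j) * (f i * f j),
          fun i j => by dsimp only; rw [max_comm (w i) (w j), mul_comm (f i) (f j)]⟩ e)
      ≤ α := by
  classical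
  let g : Sym2 V → ℝ := Sym2.lift ⟨fun i j => max (w i) (w j) * (f i * f j),
    fun i j => by dsimp only; rw [max_comm (w i) (w j), mul_comm (f i) (f j)]⟩
  change (∑ i, w i * f i) - (∑ e ∈ G.edgeFinset, g e) ≤ α
  have hf0 : ∀ i, 0 ≤ f i := fun i => by rcases hf i with h | h <;> simp [h]
  have hg0 : ∀ e, 0 ≤ g e := by
    intro e
    induction e using Sym2.ind with
    | _ i j => exact mul_nonneg (le_max_of_le_left (hw i)) (mul_nonneg (hf0 i) (hf0 j))
  -- `r` encodes the linear order and `P i` says that `i` has a larger neighbour in `T`.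
  let r : V → ℕ := fun v => Fintype.equivFin V v
  have hr : ∀ i j, r i = r j → i = j := fun i j h =>
    (Fintype.equivFin V).injective (Fin.ext h)
  let T : Finset V := univ.filter fun i => f i = 1
  let P : V → Prop := fun i => ∃ j ∈ T, G.Adj i j ∧ r i < r j
  have hT : ∑ i, w i * f i = ∑ i ∈ T, w i := by
    rw [Finset.sum_filter]
    refine Finset.sum_congr rfl fun i _ => ?_
    rcases hf i with h | h <;> simp [h]
  have hS : ∑ i ∈ T.filter (fun i => ¬ P i), w i ≤ α := by
    refine hα.2 ⟨_, ?_, rfl⟩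
    intro i hi j hj hij
    rw [Finset.mem_filter] at hi hj
    rcases lt_trichotomy (r i) (r j) with h | h | h
    · exact hi.2 ⟨j, hj.1, hij, h⟩
    · exact hij.ne (hr i j h)
    · exact hj.2 ⟨i, hi.1, hij.symm, h⟩
  have hE : ∑ i ∈ T.filter P, w i ≤ ∑ e ∈ G.edgeFinset, g e := by
    have hn : ∀ i, ∃ j, P i → j ∈ T ∧ G.Adj i j ∧ r i < r j := by
      intro i
      by_cases h : P i
      · obtain ⟨j, hj⟩ := h
        exact ⟨j, fun _ => hj⟩
      · exact ⟨i, fun h' => absurd h' h⟩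
    choose n hn using hn
    have hinj : Set.InjOn (fun i => s(i, n i)) (T.filter P : Finset V) := by
      intro i hi j hj hij
      have hi' := (hn i (Finset.mem_filter.1 hi).2).2.2
      have hj' := (hn j (Finset.mem_filter.1 hj).2).2.2
      rcases Sym2.eq_iff.1 hij with h | h
      · exact h.1
      · rw [h.2] at hi'
        rw [← h.1] at hj'
        omega
    calc ∑ i ∈ T.filter P, w i ≤ ∑ i ∈ T.filter P, g s(i, n i) := by
          refine Finset.sum_le_sum fun i hi => ?_
          have hi' := Finset.mem_filter.1 hi
          have h1 : f i = 1 := (Finset.mem_filter.1 hi'.1).2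
          have h2 : f (n i) = 1 := (Finset.mem_filter.1 (hn i hi'.2).1).2
          change w i ≤ max (w i) (w (n i)) * (f i * f (n i))
          rw [h1, h2, mul_one, mul_one]
          exact le_max_left _ _
      _ = ∑ e ∈ (T.filter P).image (fun i => s(i, n i)), g e :=
          (Finset.sum_image hinj).symm
      _ ≤ ∑ e ∈ G.edgeFinset, g e := by
          refine Finset.sum_le_sum_of_subset_of_nonneg ?_ fun e _ _ => hg0 e
          intro e he
          obtain ⟨i, hi, rfl⟩ := Finset.mem_image.1 he
          rw [SimpleGraph.mem_edgeFinset, SimpleGraph.mem_edgeSet]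
          exact (hn i (Finset.mem_filter.1 hi).2).2.1
  have hsplit := Finset.sum_filter_add_sum_filter_not T P w
  linarith
end
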